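/- (Theorem 3, equations (38)–(39), transmit axis) Let ε_τ ∈ ℝ be the current estimate of the K-th source's transmit phase and suppose ε_{τ+1} ∈ ℝ satisfies exp(j·ε_{τ+1}) = (u_1^† R u_1)/(u_1^† R u_3) (in particular u_1^† R u_3 ≠ 0). Define Q_tx(φ) = (u_1 − exp(j·φ)·u_3)^† R (u_1 − exp(j·φ)·u_3). Then Q_tx(ε_{τ+1}) = 0, and consequently Q_tx(ε_τ) − Q_tx(ε_{τ+1}) = 4^{2K−1} · Σ_{k=1}^{K} σ_k² · sin²((ε_tx,k − ε_τ)/2) · ∏_{m=1}^{K−1} sin²((ε_tx,k − ε̂_tx,m)/2) · ∏_{n=1}^{K−1} sin²((ε_rx,k − ε̂_rx,n)/2) ≥ 4^{2K−1} · σ_K² · sin²((ε_tx,K − ε_τ)/2) · ∏_{m=1}^{K−1} sin²((ε_tx,K − ε̂_tx,m)/2) · ∏_{n=1}^{K−1} sin²((ε_rx,K − ε̂_rx,n)/2) ≥ 0; in particular the cost never increases under the update, and it strictly decreases whenever ε_tx,K − ε_τ is not an integer multiple of 2π and none of ε_tx,K − ε̂_tx,m and ε_rx,K − ε̂_rx,n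 is an integer multiple of 2π. -/

import Mathlib

open scoped BigOperators

/-- Steering vector `a(ε) ∈ ℂ^{n+1}` with entries `exp(j·i·ε)`, `i = 0,…,n`. -/
noncomputable def steer (n : ℕ) (ε : ℝ) : Fin (n + 1) → ℂ :=
  fun i => Complex.exp (Complex.I * ((i : ℕ) : ℂ) * (ε : ℂ))

/-- The vector `E(η_1,…,η_m) ∈ ℂ^{m+1}` defined recursively by
`E(η_1) = (1, −exp(j·η_1))` and
`E(η_1,…,η_p) = (E(η_1,…,η_{p−1}), 0) − exp(j·η_p)·(0, E(η_1,…,η_{p−1}))`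
(with base case `E() = (1)`, which reproduces the stated base case at `m = 1`). -/
noncomputable def Evec : (m : ℕ) → (Fin m → ℝ) → (Fin (m + 1) → ℂ)
  | 0, _ => fun _ => 1
  | m + 1, η => fun i =>
      Fin.snoc (α := fun _ => ℂ) (Evec m fun j => η j.castSucc) 0 i -
        Complex.exp (Complex.I * (η (Fin.last m) : ℂ)) *
          Fin.cons (α := fun _ => ℂ) 0 (Evec m fun j => η j.castSucc) i

/-- The cyclic down-shift matrix on `ℂ^{n+1}`: `(Lv)_0 = v_n`, `(Lv)_i = v_{i−1}` for `i ≥ 1`. -/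
def Lmat (n : ℕ) : Matrix (Fin (n + 1)) (Fin (n + 1)) ℂ :=
  Matrix.of fun i l => if l = i - 1 then 1 else 0

/-- Kronecker product of vectors: `(v ⊗ w)_{(i,l)} = v_i · w_l`. -/
def kron {a b : Type*} (v : a → ℂ) (w : b → ℂ) : a × b → ℂ :=
  fun p => v p.1 * w p.2

/-- `x^† y = Σ_i conj(x_i) · y_i`. -/
noncomputable def ip {n : Type*} [Fintype n] (x y : n → ℂ) : ℂ :=
  ∑ i, (starRingEnd ℂ) (x i) * y i

/-- `x^† M y = Σ_{i,l} conj(x_i) · M_{i,l} · y_l`. -/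
noncomputable def qf {n : Type*} [Fintype n] (x : n → ℂ) (M : Matrix n n ℂ) (y : n → ℂ) : ℂ :=
  ∑ i, ∑ l, (starRingEnd ℂ) (x i) * M i l * y l

/-- `E(η_1,…,η_Kp) ∈ ℂ^{Kp+1}` padded with a trailing zero, giving a vector in `ℂ^{Kp+2}`. -/
noncomputable def Epad (Kp : ℕ) (η : Fin Kp → ℝ) : Fin (Kp + 2) → ℂ :=
  Fin.snoc (Evec Kp η) 0

/-- `u_0 = Ẽ_tx ⊗ Ẽ_rx`. -/
noncomputable def u0 (Kp : ℕ) (ηt ηr : Fin Kp → ℝ) : Fin (Kp + 2) × Fin (Kp + 2) → ℂ :=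
  kron (Epad Kp ηt) (Epad Kp ηr)

/-- `u_1 = Ẽ_tx ⊗ (L·Ẽ_rx)`. -/
noncomputable def u1 (Kp : ℕ) (ηt ηr : Fin Kp → ℝ) : Fin (Kp + 2) × Fin (Kp + 2) → ℂ :=
  kron (Epad Kp ηt) ((Lmat (Kp + 1)).mulVec (Epad Kp ηr))

/-- `u_2 = (L·Ẽ_tx) ⊗ Ẽ_rx`. -/
noncomputable def u2 (Kp : ℕ) (ηt ηr : Fin Kp → ℝ) : Fin (Kp + 2) × Fin (Kp + 2) → ℂ :=
  kron ((Lmat (Kp + 1)).mulVec (Epad Kp ηt)) (Epad Kp ηr)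

/-- `u_3 = (L·Ẽ_tx) ⊗ (L·Ẽ_rx)`. -/
noncomputable def u3 (Kp : ℕ) (ηt ηr : Fin Kp → ℝ) : Fin (Kp + 2) × Fin (Kp + 2) → ℂ :=
  kron ((Lmat (Kp + 1)).mulVec (Epad Kp ηt)) ((Lmat (Kp + 1)).mulVec (Epad Kp ηr))

/-- The noiseless auto-correlation matrix `R = Σ_{k=1}^K σ_k² A_k A_k^†`, where
`A_k = a(ε_tx,k) ⊗ a(ε_rx,k)` and `σsq k` is the power `σ_k²`. -/
noncomputable def Rmat (K : ℕ) (εtx εrx σsq : Fin K → ℝ) :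
    Matrix (Fin (K + 1) × Fin (K + 1)) (Fin (K + 1) × Fin (K + 1)) ℂ :=
  Matrix.of fun p q => ∑ k, (σsq k : ℂ) *
    kron (steer K (εtx k)) (steer K (εrx k)) p *
    (starRingEnd ℂ) (kron (steer K (εtx k)) (steer K (εrx k)) q)

/-- The rank-one matrix `R_ε = a(ε) a(ε)^† ∈ ℂ^{(Kp+2)×(Kp+2)}`. -/
noncomputable def Rsingle (Kp : ℕ) (ε : ℝ) : Matrix (Fin (Kp + 2)) (Fin (Kp + 2)) ℂ :=
  Matrix.of fun i l => steer (Kp + 1) ε i * (starRingEnd ℂ) (steer (Kp + 1) ε l)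

/-- The iDEA cost `Q_tx(φ) = (u_1 − exp(j·φ)·u_3)^† R (u_1 − exp(j·φ)·u_3)`. -/
noncomputable def Qcost (Kp : ℕ) (εtx εrx σsq : Fin (Kp + 1) → ℝ)
    (ηt ηr : Fin Kp → ℝ) (φ : ℝ) : ℂ :=
  qf (u1 Kp ηt ηr - Complex.exp (Complex.I * (φ : ℂ)) • u3 Kp ηt ηr)
    (Rmat (Kp + 1) εtx εrx σsq)
    (u1 Kp ηt ηr - Complex.exp (Complex.I * (φ : ℂ)) • u3 Kp ηt ηr)

/-- The closed-form value `4^{2K−1} · Σ_k σ_k² sin²((ε_tx,k − φ)/2) ∏_m sin²((ε_tx,k − ε̂_tx,m)/2)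
∏_n sin²((ε_rx,k − ε̂_rx,n)/2)` (here `K = Kp + 1`, so `2K − 1 = 2·Kp + 1`). -/
noncomputable def Ssum (Kp : ℕ) (εtx εrx σsq : Fin (Kp + 1) → ℝ)
    (ηt ηr : Fin Kp → ℝ) (φ : ℝ) : ℝ :=
  (4 : ℝ) ^ (2 * Kp + 1) * ∑ k, σsq k * Real.sin ((εtx k - φ) / 2) ^ 2 *
    (∏ m, Real.sin ((εtx k - ηt m) / 2) ^ 2) *
    (∏ n, Real.sin ((εrx k - ηr n) / 2) ^ 2)

/-- The `k = K` term of `Ssum`, i.e. the lower bound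
`4^{2K−1} · σ_K² sin²((ε_tx,K − φ)/2) ∏_m sin²((ε_tx,K − ε̂_tx,m)/2) ∏_n sin²((ε_rx,K − ε̂_rx,n)/2)`. -/
noncomputable def Slb (Kp : ℕ) (εtx εrx σsq : Fin (Kp + 1) → ℝ)
    (ηt ηr : Fin Kp → ℝ) (φ : ℝ) : ℝ :=
  (4 : ℝ) ^ (2 * Kp + 1) * σsq (Fin.last Kp) *
    Real.sin ((εtx (Fin.last Kp) - φ) / 2) ^ 2 *
    (∏ m, Real.sin ((εtx (Fin.last Kp) - ηt m) / 2) ^ 2) *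
    (∏ n, Real.sin ((εrx (Fin.last Kp) - ηr n) / 2) ^ 2)

/-!
`ip (Evec m η) (steer m ε)` is the polynomial `∏ (1 - e^{-jη_i} z)` evaluated at `z = e^{jε}`. The
vector `u₁ - e^{jφ} u₃` is again of the form `E ⊗ (0, E)`, with `φ` appended to the transmit
estimates, so `Q_tx(φ)` is the sum over the sources of `σ_k²` times the squared modulus of a product
of such factors, each of modulus `2 |sin|`. The shift `L` multiplies the pairing with a steering
vector by a phase, hence `u₁` and `u₃` have the same `R`-norm. The update thus satisfies
`c · u₁†Ru₃ = u₁†Ru₁` with `|c| = 1`, which is the equality case of Cauchy–Schwarz, and the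
`R`-norm of `u₁ - c u₃` vanishes.
-/

section HermitianForms

open Matrix

variable {n a b : Type*} [Fintype n] [Fintype a] [Fintype b]

lemma ip_eq_star_dotProduct (x y : n → ℂ) : ip x y = star x ⬝ᵥ y := rfl

lemma qf_eq_star_dotProduct_mulVec (x : n → ℂ) (M : Matrix n n ℂ) (y : n → ℂ) :
    qf x M y = star x ⬝ᵥ M *ᵥ y := by
  simp only [qf, dotProduct, mulVec, Finset.mul_sum, mul_assoc, Pi.star_apply, starRingEnd_apply]

lemma ip_sub_smul_left (x y z : n → ℂ) (c : ℂ) :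
    ip (x - c • y) z = ip x z - (starRingEnd ℂ) c * ip y z := by
  simp only [ip_eq_star_dotProduct, star_sub, star_smul, sub_dotProduct, smul_dotProduct,
    smul_eq_mul, starRingEnd_apply]

lemma ip_kron_kron (x x' : a → ℂ) (y y' : b → ℂ) :
    ip (kron x y) (kron x' y') = ip x x' * ip y y' := by
  simp only [ip, kron, Fintype.sum_prod_type, Finset.sum_mul_sum, map_mul]
  exact Finset.sum_congr rfl fun _ _ => Finset.sum_congr rfl fun _ _ => by ring

lemma conj_qf {M : Matrix n n ℂ} (hM : M.IsHermitian) (x y : n → ℂ) :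
    (starRingEnd ℂ) (qf x M y) = qf y M x := by
  rw [qf_eq_star_dotProduct_mulVec, qf_eq_star_dotProduct_mulVec, starRingEnd_apply,
    ← star_dotProduct_star, star_star, star_mulVec, hM.eq, ← dotProduct_mulVec]

lemma qf_sub_smul_self (M : Matrix n n ℂ) (x y : n → ℂ) (c : ℂ) :
    qf (x - c • y) M (x - c • y) = qf x M x - c * qf x M y - (starRingEnd ℂ) c * qf y M x
      + (starRingEnd ℂ) c * c * qf y M y := by
  simp only [qf_eq_star_dotProduct_mulVec, star_sub, star_smul, mulVec_sub, mulVec_smul,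
    sub_dotProduct, dotProduct_sub, smul_dotProduct, dotProduct_smul, smul_eq_mul,
    starRingEnd_apply]
  ring

lemma qf_sub_smul_self_eq_zero {M : Matrix n n ℂ} (hM : M.IsHermitian) {x y : n → ℂ} {c : ℂ}
    (hc : ‖c‖ = 1) (hxy : qf y M y = qf x M x) (h : c * qf x M y = qf x M x) :
    qf (x - c • y) M (x - c • y) = 0 := by
  have hconj : (starRingEnd ℂ) c * qf y M x = qf x M x := by
    rw [← conj_qf hM x y, ← map_mul, h, conj_qf hM]
  have hunit : (starRingEnd ℂ) c * c = 1 := by simp [Complex.conj_mul', hc]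
  rw [qf_sub_smul_self, h, hconj, hunit, hxy]
  ring

end HermitianForms

section AutoCorrelation

open Matrix

variable {K : ℕ} (εtx εrx σsq : Fin K → ℝ)

lemma Rmat_eq_sum_vecMulVec :
    Rmat K εtx εrx σsq = ∑ k, σsq k • vecMulVec (kron (steer K (εtx k)) (steer K (εrx k)))
      (star (kron (steer K (εtx k)) (steer K (εrx k)))) := by
  ext p q
  simp only [Rmat, of_apply, Matrix.sum_apply, Matrix.smul_apply, vecMulVec_apply,
    Pi.star_apply, starRingEnd_apply, Complex.real_smul, mul_assoc]

lemma isHermitian_Rmat : (Rmat K εtx εrx σsq).IsHermitian := by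
  rw [Rmat_eq_sum_vecMulVec, IsHermitian, conjTranspose_sum]
  simp only [conjTranspose_smul, conjTranspose_vecMulVec, star_star, star_trivial]

lemma qf_Rmat_self (x : Fin (K + 1) × Fin (K + 1) → ℂ) :
    qf x (Rmat K εtx εrx σsq) x =
      ((∑ k, σsq k * ‖ip x (kron (steer K (εtx k)) (steer K (εrx k)))‖ ^ 2 : ℝ) : ℂ) := by
  rw [qf_eq_star_dotProduct_mulVec, Rmat_eq_sum_vecMulVec, sum_mulVec, dotProduct_sum]
  push_cast
  refine Finset.sum_congr rfl fun k _ => ?_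
  rw [← Complex.mul_conj', smul_mulVec, dotProduct_smul, vecMulVec_mulVec, dotProduct_smul,
    star_dotProduct, ip_eq_star_dotProduct, starRingEnd_apply, Complex.real_smul,
    MulOpposite.smul_eq_mul_unop, MulOpposite.unop_op]

end AutoCorrelation

section SteeringVectors

lemma conj_exp_I_mul_ofReal_mul_exp (x y : ℝ) :
    (starRingEnd ℂ) (Complex.exp (Complex.I * x)) * Complex.exp (Complex.I * y) =
      Complex.exp (Complex.I * ((y - x : ℝ) : ℂ)) := by
  rw [← Complex.exp_conj, ← Complex.exp_add, map_mul, Complex.conj_I, Complex.conj_ofReal]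
  congr 1
  push_cast
  ring

lemma norm_one_sub_exp_I_mul_ofReal_sq (x : ℝ) :
    ‖1 - Complex.exp (Complex.I * x)‖ ^ 2 = 4 * Real.sin (x / 2) ^ 2 := by
  rw [norm_sub_rev, Complex.norm_exp_I_mul_ofReal_sub_one, Real.norm_eq_abs, sq_abs]
  ring

variable {n : ℕ} (v : Fin (n + 1) → ℂ) (ε : ℝ)

lemma ip_snoc_zero_steer :
    ip (Fin.snoc (α := fun _ => ℂ) v 0) (steer (n + 1) ε) = ip v (steer n ε) := by
  simp [ip, steer, Fin.sum_univ_castSucc]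

lemma ip_cons_zero_steer :
    ip (Fin.cons (α := fun _ => ℂ) 0 v) (steer (n + 1) ε) =
      Complex.exp (Complex.I * ε) * ip v (steer n ε) := by
  have steer_succ (i : Fin (n + 1)) :
      steer (n + 1) ε i.succ = Complex.exp (Complex.I * ε) * steer n ε i := by
    rw [steer, steer, ← Complex.exp_add]
    congr 1
    push_cast [Fin.val_succ]
    ring
  rw [ip, Fin.sum_univ_succ, ip, Finset.mul_sum]
  simp only [Fin.cons_zero, Fin.cons_succ, steer_succ, map_zero, zero_mul, zero_add,
    mul_left_comm]

lemma norm_ip_cons_zero_steer :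
    ‖ip (Fin.cons (α := fun _ => ℂ) 0 v) (steer (n + 1) ε)‖ = ‖ip v (steer n ε)‖ := by
  rw [ip_cons_zero_steer, norm_mul, Complex.norm_exp_I_mul_ofReal, one_mul]

end SteeringVectors

section ShiftedEstimates

lemma kron_sub_smul_left {a b : Type*} (x x' : a → ℂ) (y : b → ℂ) (c : ℂ) :
    kron (x - c • x') y = kron x y - c • kron x' y := by
  funext p
  simp only [kron, Pi.sub_apply, Pi.smul_apply, smul_eq_mul]
  ring

lemma Lmat_mulVec_snoc {n : ℕ} (v : Fin n → ℂ) (c : ℂ) :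
    (Lmat n).mulVec (Fin.snoc (α := fun _ => ℂ) v c) = Fin.cons (α := fun _ => ℂ) c v := by
  funext i
  have hshift (w : Fin (n + 1) → ℂ) : (Lmat n).mulVec w i = w (i - 1) := by
    simp [Matrix.mulVec, dotProduct, Lmat]
  rw [hshift]
  cases i using Fin.cases with
  | zero =>
    have : (0 - 1 : Fin (n + 1)) = Fin.last n := by rw [sub_eq_iff_eq_add, Fin.last_add_one]
    rw [this, Fin.snoc_last, Fin.cons_zero]
  | succ i =>
    have : i.succ - 1 = i.castSucc := by rw [sub_eq_iff_eq_add, Fin.coeSucc_eq_succ]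
    rw [this, Fin.snoc_castSucc, Fin.cons_succ]

lemma Evec_snoc {m : ℕ} (η : Fin m → ℝ) (φ : ℝ) :
    Evec (m + 1) (Fin.snoc (α := fun _ => ℝ) η φ) =
      Fin.snoc (α := fun _ => ℂ) (Evec m η) 0 -
        Complex.exp (Complex.I * φ) • Fin.cons (α := fun _ => ℂ) 0 (Evec m η) := by
  funext i
  simp only [Evec, Fin.snoc_castSucc, Fin.snoc_last, Pi.sub_apply, Pi.smul_apply, smul_eq_mul]

lemma ip_Evec_steer {m : ℕ} (η : Fin m → ℝ) (ε : ℝ) :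
    ip (Evec m η) (steer m ε) =
      ∏ i, (1 - Complex.exp (Complex.I * ((ε - η i : ℝ) : ℂ))) := by
  induction m with
  | zero => simp [ip, Evec, steer]
  | succ m ih =>
    rw [← Fin.snoc_init_self η, Evec_snoc, ip_sub_smul_left, ip_snoc_zero_steer,
      ip_cons_zero_steer, ← mul_assoc, conj_exp_I_mul_ofReal_mul_exp, ih, Fin.prod_univ_castSucc]
    simp only [Fin.snoc_castSucc, Fin.snoc_last]
    ring

lemma norm_ip_Evec_steer_sq {m : ℕ} (η : Fin m → ℝ) (ε : ℝ) :
    ‖ip (Evec m η) (steer m ε)‖ ^ 2 = 4 ^ m * ∏ i, Real.sin ((ε - η i) / 2) ^ 2 := by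
  rw [ip_Evec_steer, norm_prod, ← Finset.prod_pow]
  simp only [norm_one_sub_exp_I_mul_ofReal_sq, Finset.prod_mul_distrib, Finset.prod_const,
    Finset.card_univ, Fintype.card_fin]

variable {Kp : ℕ} (ηt ηr : Fin Kp → ℝ)

lemma u1_sub_smul_u3 (φ : ℝ) :
    u1 Kp ηt ηr - Complex.exp (Complex.I * φ) • u3 Kp ηt ηr =
      kron (Evec (Kp + 1) (Fin.snoc (α := fun _ => ℝ) ηt φ))
        (Fin.cons (α := fun _ => ℂ) 0 (Evec Kp ηr)) := by
  rw [Evec_snoc, kron_sub_smul_left, u1, u3, Epad, Epad, Lmat_mulVec_snoc, Lmat_mulVec_snoc]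

lemma norm_ip_u3_eq_norm_ip_u1 (x y : ℝ) :
    ‖ip (u3 Kp ηt ηr) (kron (steer (Kp + 1) x) (steer (Kp + 1) y))‖ =
      ‖ip (u1 Kp ηt ηr) (kron (steer (Kp + 1) x) (steer (Kp + 1) y))‖ := by
  rw [u3, u1, ip_kron_kron, ip_kron_kron, norm_mul, norm_mul, Epad, Lmat_mulVec_snoc,
    norm_ip_cons_zero_steer, ip_snoc_zero_steer]

end ShiftedEstimates

section Cost

lemma sin_half_ne_zero_iff {x : ℝ} :
    Real.sin (x / 2) ≠ 0 ↔ ¬ ∃ n : ℤ, x = n * (2 * Real.pi) := by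
  rw [ne_eq, Real.sin_eq_zero_iff, not_iff_not]
  exact exists_congr fun n => by constructor <;> intro h <;> linarith

variable {Kp : ℕ} (ηt ηr : Fin Kp → ℝ)

/-- The contribution to the transmit cost at `φ` of a single source of power `σsq` with transmit
phase `x` and receive phase `y`. -/
noncomputable def sourceCost (σsq x y φ : ℝ) : ℝ :=
  4 ^ (2 * Kp + 1) * σsq * Real.sin ((x - φ) / 2) ^ 2 *
    (∏ m, Real.sin ((x - ηt m) / 2) ^ 2) * (∏ n, Real.sin ((y - ηr n) / 2) ^ 2)

lemma mul_norm_ip_u1_sub_smul_u3_sq (σsq x y φ : ℝ) :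
    σsq * ‖ip (u1 Kp ηt ηr - Complex.exp (Complex.I * φ) • u3 Kp ηt ηr)
      (kron (steer (Kp + 1) x) (steer (Kp + 1) y))‖ ^ 2 = sourceCost ηt ηr σsq x y φ := by
  rw [u1_sub_smul_u3, ip_kron_kron, norm_mul, mul_pow, norm_ip_cons_zero_steer,
    norm_ip_Evec_steer_sq, norm_ip_Evec_steer_sq, Fin.prod_univ_castSucc]
  simp only [Fin.snoc_castSucc, Fin.snoc_last, sourceCost]
  ring

lemma sourceCost_nonneg {σsq : ℝ} (hσ : 0 ≤ σsq) (x y φ : ℝ) :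
    0 ≤ sourceCost ηt ηr σsq x y φ := by
  unfold sourceCost
  positivity

variable {ηt ηr} in
lemma sourceCost_pos {σsq x y φ : ℝ} (hσ : 0 < σsq) (hφ : Real.sin ((x - φ) / 2) ≠ 0)
    (ht : ∀ m, Real.sin ((x - ηt m) / 2) ≠ 0) (hr : ∀ n, Real.sin ((y - ηr n) / 2) ≠ 0) :
    0 < sourceCost ηt ηr σsq x y φ := by
  have htx : 0 < ∏ m, Real.sin ((x - ηt m) / 2) ^ 2 :=
    Finset.prod_pos fun m _ => sq_pos_of_ne_zero (ht m)
  have hrx : 0 < ∏ n, Real.sin ((y - ηr n) / 2) ^ 2 :=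
    Finset.prod_pos fun n _ => sq_pos_of_ne_zero (hr n)
  have hpow : 0 < (4 : ℝ) ^ (2 * Kp + 1) := by positivity
  exact mul_pos (mul_pos (mul_pos (mul_pos hpow hσ) (sq_pos_of_ne_zero hφ)) htx) hrx

variable (εtx εrx σsq : Fin (Kp + 1) → ℝ)

lemma Ssum_eq_sum_sourceCost (φ : ℝ) :
    Ssum Kp εtx εrx σsq ηt ηr φ = ∑ k, sourceCost ηt ηr (σsq k) (εtx k) (εrx k) φ := by
  simp only [Ssum, sourceCost, Finset.mul_sum, mul_assoc]

lemma sourceCost_le_Ssum {σsq : Fin (Kp + 1) → ℝ} (hσ : ∀ k, 0 ≤ σsq k) (φ : ℝ)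
    (k : Fin (Kp + 1)) :
    sourceCost ηt ηr (σsq k) (εtx k) (εrx k) φ ≤ Ssum Kp εtx εrx σsq ηt ηr φ := by
  rw [Ssum_eq_sum_sourceCost]
  exact Finset.single_le_sum (f := fun k => sourceCost ηt ηr (σsq k) (εtx k) (εrx k) φ)
    (fun k _ => sourceCost_nonneg ηt ηr (hσ k) _ _ _) (Finset.mem_univ k)

lemma Slb_eq_sourceCost_last (φ : ℝ) :
    Slb Kp εtx εrx σsq ηt ηr φ = sourceCost ηt ηr (σsq (Fin.last Kp)) (εtx (Fin.last Kp))
      (εrx (Fin.last Kp)) φ := rfl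

lemma Qcost_eq_Ssum (φ : ℝ) :
    Qcost Kp εtx εrx σsq ηt ηr φ = (Ssum Kp εtx εrx σsq ηt ηr φ : ℂ) := by
  rw [Qcost, qf_Rmat_self, Ssum_eq_sum_sourceCost]
  simp only [mul_norm_ip_u1_sub_smul_u3_sq]

lemma qf_u3_eq_qf_u1 :
    qf (u3 Kp ηt ηr) (Rmat (Kp + 1) εtx εrx σsq) (u3 Kp ηt ηr) =
      qf (u1 Kp ηt ηr) (Rmat (Kp + 1) εtx εrx σsq) (u1 Kp ηt ηr) := by
  simp only [qf_Rmat_self, norm_ip_u3_eq_norm_ip_u1]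

variable {ηt ηr εtx εrx σsq} in
lemma Qcost_eq_zero_of_exp_eq_div {φ : ℝ}
    (hup : Complex.exp (Complex.I * φ) =
      qf (u1 Kp ηt ηr) (Rmat (Kp + 1) εtx εrx σsq) (u1 Kp ηt ηr) /
        qf (u1 Kp ηt ηr) (Rmat (Kp + 1) εtx εrx σsq) (u3 Kp ηt ηr)) :
    Qcost Kp εtx εrx σsq ηt ηr φ = 0 := by
  -- A vanishing denominator would make the quotient `0`, which is not a value of `exp`.
  have hden : qf (u1 Kp ηt ηr) (Rmat (Kp + 1) εtx εrx σsq) (u3 Kp ηt ηr) ≠ 0 := fun h =>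
    Complex.exp_ne_zero _ (by rw [hup, h, div_zero])
  exact qf_sub_smul_self_eq_zero (isHermitian_Rmat εtx εrx σsq) (Complex.norm_exp_I_mul_ofReal φ)
    (qf_u3_eq_qf_u1 ηt ηr εtx εrx σsq) ((eq_div_iff hden).mp hup)

end Cost

/-- Theorem 3, eqs. (38)–(39), transmit axis: if
exp(j·ε_{τ+1}) = (u_1^† R u_1)/(u_1^† R u_3), then Q_tx(ε_{τ+1}) = 0,
Q_tx(ε_τ) − Q_tx(ε_{τ+1}) equals the closed-form sum, which is bounded below by its
K-th term, which is nonnegative; and the decrease is strict whenever ε_tx,K − ε_τ is not an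
integer multiple of 2π and none of ε_tx,K − ε̂_tx,m and ε_rx,K − ε̂_rx,n is. -/
theorem statement19 (Kp : ℕ) (hKp : 1 ≤ Kp) (εtx εrx : Fin (Kp + 1) → ℝ)
    (σsq : Fin (Kp + 1) → ℝ) (hσ : ∀ k, 0 < σsq k) (ηt ηr : Fin Kp → ℝ) (ετ ετ1 : ℝ)
    (hup : Complex.exp (Complex.I * (ετ1 : ℂ)) =
      qf (u1 Kp ηt ηr) (Rmat (Kp + 1) εtx εrx σsq) (u1 Kp ηt ηr) /
        qf (u1 Kp ηt ηr) (Rmat (Kp + 1) εtx εrx σsq) (u3 Kp ηt ηr)) :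
    Qcost Kp εtx εrx σsq ηt ηr ετ1 = 0 ∧
    Qcost Kp εtx εrx σsq ηt ηr ετ - Qcost Kp εtx εrx σsq ηt ηr ετ1 =
      ((Ssum Kp εtx εrx σsq ηt ηr ετ : ℝ) : ℂ) ∧
    Slb Kp εtx εrx σsq ηt ηr ετ ≤ Ssum Kp εtx εrx σsq ηt ηr ετ ∧
    0 ≤ Slb Kp εtx εrx σsq ηt ηr ετ ∧
    (((¬ ∃ n : ℤ, εtx (Fin.last Kp) - ετ = n * (2 * Real.pi)) ∧
      (∀ m : Fin Kp, ¬ ∃ n : ℤ, εtx (Fin.last Kp) - ηt m = n * (2 * Real.pi)) ∧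
      (∀ m : Fin Kp, ¬ ∃ n : ℤ, εrx (Fin.last Kp) - ηr m = n * (2 * Real.pi))) →
      0 < Ssum Kp εtx εrx σsq ηt ηr ετ) := by
  have hzero : Qcost Kp εtx εrx σsq ηt ηr ετ1 = 0 := Qcost_eq_zero_of_exp_eq_div hup
  have hlast := Slb_eq_sourceCost_last ηt ηr εtx εrx σsq ετ
  have hle : Slb Kp εtx εrx σsq ηt ηr ετ ≤ Ssum Kp εtx εrx σsq ηt ηr ετ :=
    hlast.trans_le (sourceCost_le_Ssum ηt ηr εtx εrx (fun k => (hσ k).le) ετ (Fin.last Kp))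
  refine ⟨hzero, ?_, hle, ?_, fun ⟨hφ, ht, hr⟩ => hle.trans_lt' ?_⟩
  · rw [hzero, sub_zero, Qcost_eq_Ssum]
  · exact hlast ▸ sourceCost_nonneg ηt ηr (hσ _).le _ _ _
  · exact hlast ▸ sourceCost_pos (hσ _) (sin_half_ne_zero_iff.mpr hφ)
      (fun m => sin_half_ne_zero_iff.mpr (ht m)) (fun n => sin_half_ne_zero_iff.mpr (hr n))
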